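/- arXiv:2404.17162 — 9 statements merged into one kernel-verified Lean document; each statement's English description precedes it below -/
import Mathlib

section
/- Let G be a connected simple finite graph that is Z-vertex magic (i.e., admits a Z-vertex magic labeling). Then there exists k ∈ ℕ such that G is Z_m-vertex magic for every integer m ≥ k. -/
open scoped Classical

/-- A graph `G` on a finite vertex type is `A`-vertex magic if there is a labeling of the
vertices by nonzero elements of `A` such that the sum of the labels over each open
neighborhood is a constant `μ`. -/
def vertexMagic {V : Type*} [Fintype V] (G : SimpleGraph V) (A : Type*) [AddCommGroup A] :
    Prop :=
  ∃ (l : V → A) (μ : A), (∀ v, l v ≠ 0) ∧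
    ∀ v : V, (∑ u : V, if G.Adj v u then l u else 0) = μ

theorem vertexMagic_of_map_ne_zero {V A B : Type*} [Fintype V] [AddCommGroup A] [AddCommGroup B]
    {G : SimpleGraph V} {l : V → A} {μ : A}
    (hμ : ∀ v, (∑ u, if G.Adj v u then l u else 0) = μ)
    (f : A →+ B) (hf : ∀ v, f (l v) ≠ 0) : vertexMagic G B := by
  refine ⟨fun v => f (l v), f μ, hf, fun v => ?_⟩
  simp only [← hμ v, map_sum, apply_ite f, map_zero]

theorem eventually_intCast_zmod_ne_zero {a : ℤ} (ha : a ≠ 0) :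
    ∀ᶠ m : ℕ in Filter.atTop, (a : ZMod m) ≠ 0 := by
  filter_upwards [Filter.eventually_gt_atTop a.natAbs] with m hm h
  have hdvd : (m : ℤ) ∣ a := (ZMod.intCast_zmod_eq_zero_iff_dvd a m).mp h
  exact ha (Int.eq_zero_of_dvd_of_natAbs_lt_natAbs hdvd hm)

theorem stmt_0_general {V : Type*} [Fintype V] (G : SimpleGraph V) (h : vertexMagic G ℤ) :
    ∃ k : ℕ, ∀ m : ℕ, k ≤ m → vertexMagic G (ZMod m) := by
  obtain ⟨l, μ, hl, hμ⟩ := h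
  have hcast : ∀ᶠ m : ℕ in Filter.atTop, ∀ v, (l v : ZMod m) ≠ 0 :=
    Filter.eventually_all.mpr fun v => eventually_intCast_zmod_ne_zero (hl v)
  obtain ⟨k, hk⟩ := Filter.eventually_atTop.mp hcast
  exact ⟨k, fun m hm => vertexMagic_of_map_ne_zero hμ (Int.castAddHom (ZMod m)) (hk m hm)⟩

theorem stmt_0 {V : Type*} [Fintype V] (G : SimpleGraph V) (hG : G.Connected)
    (h : vertexMagic G ℤ) :
    ∃ k : ℕ, ∀ m : ℕ, k ≤ m → vertexMagic G (ZMod m) :=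
  stmt_0_general G h
end

section
/- Let G be a connected simple finite graph, m ∈ ℕ, and suppose there is a single labeling l of V(G) by integers that, when interpreted modulo p, is a Z_p-vertex magic labeling of G for every prime p ≥ m. Then G is Z-vertex magic. -/
open scoped Classical

/-!
A labeling that becomes magic under each homomorphism of a jointly injective family is magic,
because two weights with the same images are equal. The reductions of `ℤ` modulo infinitely many
integers form such a family: a difference divisible by arbitrarily large moduli is zero.
-/

section Labeling

variable {V A : Type*} [Fintype V]

/-- The weight of the vertex `v` under the labeling `l`: the sum of the labels over its open
neighborhood, encoded as in `vertexMagic` by a sum over all vertices. -/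
noncomputable def neighborWeight [AddCommMonoid A] (G : SimpleGraph V) (l : V → A) (v : V) : A :=
  ∑ u : V, if G.Adj v u then l u else 0

/-- `l` witnesses that `G` is vertex magic: its labels are nonzero and all weights agree. -/
def IsVertexMagicLabeling [AddCommMonoid A] (G : SimpleGraph V) (l : V → A) : Prop :=
  (∀ v, l v ≠ 0) ∧ ∃ μ, ∀ v, neighborWeight G l v = μ

theorem map_neighborWeight {B : Type*} [AddCommMonoid A] [AddCommMonoid B]
    (f : A →+ B) (G : SimpleGraph V) (l : V → A) (v : V) :
    f (neighborWeight G l v) = neighborWeight G (f ∘ l) v := by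
  simp only [neighborWeight, map_sum, apply_ite f, map_zero, Function.comp_apply]

theorem IsVertexMagicLabeling.vertexMagic [AddCommGroup A] {G : SimpleGraph V} {l : V → A}
    (h : IsVertexMagicLabeling G l) : vertexMagic G A :=
  let ⟨hl, μ, hμ⟩ := h
  ⟨l, μ, hl, hμ⟩

theorem IsVertexMagicLabeling.of_jointly_injective {ι : Type*} [Nonempty ι] {B : ι → Type*}
    [AddCommMonoid A] [∀ i, AddCommMonoid (B i)] {G : SimpleGraph V} {l : V → A}
    (f : ∀ i, A →+ B i) (hf : ∀ a b, (∀ i, f i a = f i b) → a = b)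
    (h : ∀ i, IsVertexMagicLabeling G (f i ∘ l)) : IsVertexMagicLabeling G l := by
  have weight_eq (v w : V) : neighborWeight G l v = neighborWeight G l w := by
    refine hf _ _ fun i ↦ ?_
    obtain ⟨-, μ, hμ⟩ := h i
    rw [map_neighborWeight, map_neighborWeight, hμ v, hμ w]
  constructor
  · intro v hv
    obtain ⟨i⟩ := ‹Nonempty ι›
    exact (h i).1 v (by rw [Function.comp_apply, hv, map_zero])
  · rcases isEmpty_or_nonempty V with _ | ⟨⟨v₀⟩⟩
    · exact ⟨0, isEmptyElim⟩
    · exact ⟨neighborWeight G l v₀, fun v ↦ weight_eq v v₀⟩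

end Labeling

theorem int_eq_of_infinite_zmod_cast_eq {S : Set ℕ} (hS : S.Infinite) {a b : ℤ}
    (h : ∀ n ∈ S, (a : ZMod n) = b) : a = b := by
  obtain ⟨n, hn, hlt⟩ := hS.exists_gt (b - a).natAbs
  have hdvd : (n : ℤ) ∣ b - a := (ZMod.intCast_eq_intCast_iff_dvd_sub a b n).mp (h n hn)
  have hzero : b - a = 0 := Int.eq_zero_of_dvd_of_natAbs_lt_natAbs hdvd hlt
  exact (sub_eq_zero.mp hzero).symm

theorem infinite_setOf_prime_and_le (m : ℕ) : {p : ℕ | p.Prime ∧ m ≤ p}.Infinite :=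
  (Nat.infinite_setOfPred_prime.sdiff (Set.finite_lt_nat m)).mono fun _ hp ↦
    ⟨hp.1, not_lt.mp hp.2⟩

theorem stmt_1_general {V : Type*} [Fintype V] {G : SimpleGraph V} {l : V → ℤ} {S : Set ℕ}
    (hS : S.Infinite) (h : ∀ n ∈ S, IsVertexMagicLabeling G (fun v ↦ (l v : ZMod n))) :
    IsVertexMagicLabeling G l :=
  have : Nonempty S := hS.nonempty.to_subtype
  .of_jointly_injective (fun n : S ↦ Int.castAddHom (ZMod n))
    (fun _ _ hab ↦ int_eq_of_infinite_zmod_cast_eq hS fun n hn ↦ hab ⟨n, hn⟩)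
    (fun n ↦ h n n.2)

theorem stmt_1 {V : Type*} [Fintype V] (G : SimpleGraph V) (hG : G.Connected)
    (m : ℕ) (l : V → ℤ)
    (h : ∀ p : ℕ, p.Prime → m ≤ p →
      (∀ v : V, ((l v : ZMod p)) ≠ 0) ∧
      ∃ μ : ZMod p, ∀ v : V, (∑ u : V, if G.Adj v u then ((l u : ZMod p)) else 0) = μ) :
    vertexMagic G ℤ := by
  have hl : IsVertexMagicLabeling G l :=
    stmt_1_general (infinite_setOf_prime_and_le m) fun p hp ↦ h p hp.1 hp.2
  exact hl.vertexMagic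
end

section
/- Let A be an Abelian group with |A| > 2 and let G be a finite simple graph. If the reduced graph H of G is A-vertex magic, then G is A-vertex magic. -/
open scoped Classical

/-- The equivalence relation `u ∼_G v ↔ N_G(u) = N_G(v)`. -/
def nbhdSetoid {V : Type*} (G : SimpleGraph V) : Setoid V :=
  ⟨fun u v => G.neighborSet u = G.neighborSet v,
    ⟨fun _ => rfl, Eq.symm, Eq.trans⟩⟩

/-- The reduced graph of `G`: vertices are the equivalence classes of `∼_G`, with `[u]`
adjacent to `[v]` iff `u` is adjacent to `v` in `G`. -/
def reducedGraph {V : Type*} (G : SimpleGraph V) :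
    SimpleGraph (Quotient (nbhdSetoid G)) where
  Adj x y := ∃ u v : V, Quotient.mk (nbhdSetoid G) u = x ∧
    Quotient.mk (nbhdSetoid G) v = y ∧ G.Adj u v
  symm := by
    refine ⟨?_⟩
    rintro x y ⟨u, v, hu, hv, h⟩
    exact ⟨v, u, hv, hu, h.symm⟩
  loopless := by
    refine ⟨?_⟩
    rintro x ⟨u, v, hu, hv, h⟩
    rw [← hv] at hu
    have hN : G.neighborSet u = G.neighborSet v := Quotient.exact hu
    have hm : u ∈ G.neighborSet v := h.symm
    rw [← hN] at hm
    exact G.loopless.irrefl u hm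

/-!
The reduced graph determines `G` by pulling back along the quotient map, so it suffices to pull
back labelings along a surjection `f`. The weight of `v` in the pullback is the sum of the fiber
sums over the neighbors of `f v`, so any nowhere-zero labeling whose sum over the fiber of `w` is
the old label of `w` keeps the magic constant. Such labelings exist because, in a group with more
than two elements, a nonzero element is a sum of any positive number of nonzero elements: one can
split off a summand other than `0` and the element itself.
-/

theorem exists_ne_ne_of_two_lt_mk {α : Type*} (h : 2 < Cardinal.mk α) (x y : α) :
    ∃ z : α, z ≠ x ∧ z ≠ y := by
  have two_add_one_le : ((2 : ℕ) : Cardinal) + 1 ≤ Cardinal.mk α :=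
    Cardinal.natCast_add_one_le_iff.2 (mod_cast h)
  exact Cardinal.exists_ne_ne_of_three_le (mod_cast two_add_one_le) x y

section NonzeroSummands

variable {ι A : Type*} [AddCommGroup A]

theorem exists_forall_ne_zero_sum_eq (hA : 2 < Cardinal.mk A) {s : Finset ι} (hs : s.Nonempty)
    {a : A} (ha : a ≠ 0) : ∃ f : ι → A, (∀ i, f i ≠ 0) ∧ ∑ i ∈ s, f i = a := by
  induction hs using Finset.Nonempty.cons_induction generalizing a with
  | singleton i => exact ⟨fun _ => a, fun _ => ha, Finset.sum_singleton _ i⟩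
  | cons i s hi _ ih =>
    obtain ⟨b, hb, hba⟩ := exists_ne_ne_of_two_lt_mk hA 0 a
    obtain ⟨f, hf, hsum⟩ := ih (sub_ne_zero.2 hba.symm)
    refine ⟨Function.update f i b, ?_, ?_⟩
    · exact (Function.forall_update_iff f fun _ x => x ≠ 0).2 ⟨hb, fun j _ => hf j⟩
    · rw [Finset.sum_cons, Function.update_self, Finset.sum_update_of_notMem hi, hsum,
        add_sub_cancel]

theorem exists_forall_ne_zero_sum_fiber_eq [Fintype ι] {κ : Type*} (hA : 2 < Cardinal.mk A)
    {f : ι → κ} (hf : f.Surjective) {l : κ → A} (hl : ∀ k, l k ≠ 0) :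
    ∃ l' : ι → A, (∀ i, l' i ≠ 0) ∧ ∀ k, ∑ i with f i = k, l' i = l k := by
  have fiber_nonempty (k : κ) : (Finset.univ.filter (f · = k)).Nonempty :=
    (hf k).imp fun i hi => Finset.mem_filter.2 ⟨Finset.mem_univ i, hi⟩
  choose F hF hsum using fun k => exists_forall_ne_zero_sum_eq hA (fiber_nonempty k) (hl k)
  refine ⟨fun i => F (f i) i, fun i => hF _ i, fun k => ?_⟩
  calc ∑ i with f i = k, F (f i) i
      = ∑ i with f i = k, F k i :=
        Finset.sum_congr rfl fun i hi => by rw [(Finset.mem_filter.1 hi).2]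
    _ = l k := hsum k

end NonzeroSummands

theorem vertexMagic.comap {V W A : Type*} [Fintype V] [Fintype W] [AddCommGroup A]
    {H : SimpleGraph W} (h : vertexMagic H A) (hA : 2 < Cardinal.mk A) {f : V → W}
    (hf : f.Surjective) : vertexMagic (H.comap f) A := by
  obtain ⟨l, μ, hl, hμ⟩ := h
  obtain ⟨l', hl', hsum⟩ := exists_forall_ne_zero_sum_fiber_eq hA hf hl
  refine ⟨l', μ, hl', fun v => ?_⟩
  calc (∑ u, if (H.comap f).Adj v u then l' u else 0)
      = ∑ u with f u ∈ Finset.univ.filter (H.Adj (f v)), l' u := by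
        simp only [SimpleGraph.comap_adj, Finset.mem_filter_univ, Finset.sum_filter]
    _ = ∑ w with H.Adj (f v) w, ∑ u with f u = w, l' u :=
        (Finset.sum_fiberwise_eq_sum_filter _ _ f l').symm
    _ = ∑ w, if H.Adj (f v) w then l w else 0 := by simp only [hsum, Finset.sum_filter]
    _ = μ := hμ (f v)

theorem comap_mk_reducedGraph {V : Type*} (G : SimpleGraph V) :
    (reducedGraph G).comap (Quotient.mk (nbhdSetoid G)) = G := by
  ext u v
  refine ⟨?_, fun huv => ⟨u, v, rfl, rfl, huv⟩⟩
  rintro ⟨u', v', hu, hv, huv⟩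
  have hNu : G.neighborSet u' = G.neighborSet u := Quotient.exact hu
  have hNv : G.neighborSet v' = G.neighborSet v := Quotient.exact hv
  have huv' : v' ∈ G.neighborSet u := hNu ▸ huv
  have hvu : u ∈ G.neighborSet v := hNv ▸ G.adj_symm huv'
  exact G.adj_symm hvu

theorem stmt_2 {V : Type*} [Fintype V] (G : SimpleGraph V)
    (A : Type*) [AddCommGroup A] (hA : 2 < Cardinal.mk A)
    (h : vertexMagic (reducedGraph G) A) :
    vertexMagic G A := by
  rw [← comap_mk_reducedGraph G]
  exact h.comap hA Quotient.mk_surjective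
end

section
/- Let A be an Abelian group with |A| > 2. For any complete m-partite graph G = K_{n_1,n_2,...,n_m} and any n ∈ ℕ, the join G + K_n (obtained by adding all edges between V(G) and the vertices of a complete graph K_n) is A-vertex magic. -/
open scoped Classical

/-- The join `G + H` of two graphs: the disjoint union of `G` and `H` together with all
edges between the vertices of `G` and the vertices of `H`. -/
def graphJoin {α β : Type*} (G : SimpleGraph α) (H : SimpleGraph β) :
    SimpleGraph (α ⊕ β) where
  Adj x y :=
    match x, y with
    | Sum.inl a, Sum.inl b => G.Adj a b
    | Sum.inr a, Sum.inr b => H.Adj a b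
    | Sum.inl _, Sum.inr _ => True
    | Sum.inr _, Sum.inl _ => True
  symm := by
    constructor
    rintro (a | a) (b | b) h <;> simp_all
    · exact h.symm
    · exact h.symm
  loopless := by
    constructor
    rintro (a | a) h <;> simp_all

/-! Give every part of a complete multipartite graph the same total label `a ≠ 0`; a group with a
third element leaves enough freedom to do this with nonzero labels. The open neighborhood of a
vertex is the complement of its part, so its weight is the total label minus `a`. A join of complete
multipartite graphs is complete multipartite, and complete graphs are the case of singleton parts.
-/

section Labelings

variable {V A : Type*} [AddCommGroup A]

theorem exists_forall_ne_zero_and_sum_eq (hA : 2 < Cardinal.mk A) {a : A} (ha : a ≠ 0)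
    {s : Finset V} (hs : s.Nonempty) : ∃ f : V → A, (∀ v, f v ≠ 0) ∧ ∑ v ∈ s, f v = a := by
  induction hs using Finset.Nonempty.cons_induction generalizing a with
  | singleton v => exact ⟨fun _ => a, fun _ => ha, Finset.sum_singleton _ _⟩
  | cons v s hv _ ih =>
    obtain ⟨b, hb⟩ : ∃ b : A, b ∉ [0, a] :=
      Cardinal.exists_notMem_of_length_lt _ (by simpa using hA)
    obtain ⟨hb₀, hba⟩ : b ≠ 0 ∧ b ≠ a := by simpa using hb
    obtain ⟨f, hf, hfs⟩ := ih (sub_ne_zero.mpr hba.symm)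
    refine ⟨Function.update f v b,
      (Function.forall_update_iff f fun _ x => x ≠ 0).mpr ⟨hb₀, fun u _ => hf u⟩, ?_⟩
    rw [Finset.sum_cons, Function.update_self, Finset.sum_update_of_notMem hv, hfs,
      add_sub_cancel]

theorem exists_forall_ne_zero_and_forall_sum_class_eq [Fintype V] (hA : 2 < Cardinal.mk A) {a : A}
    (ha : a ≠ 0) (r : Setoid V) :
    ∃ f : V → A, (∀ v, f v ≠ 0) ∧ ∀ v, ∑ u with r v u, f u = a := by
  have label_class (q : Quotient r) :
      ∃ f : V → A, (∀ v, f v ≠ 0) ∧ ∑ u with q = ⟦u⟧, f u = a :=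
    exists_forall_ne_zero_and_sum_eq hA ha ⟨q.out, by simp⟩
  choose f hf hfs using label_class
  refine ⟨fun v => f ⟦v⟧ v, fun v => hf _ v, fun v => ?_⟩
  calc ∑ u with r v u, f ⟦u⟧ u = ∑ u with (⟦v⟧ : Quotient r) = ⟦u⟧, f ⟦v⟧ u :=
        Finset.sum_congr (by simp only [Quotient.eq]) fun u hu => by
          rw [(Finset.mem_filter.mp hu).2]
    _ = a := hfs ⟦v⟧

end Labelings

section CompleteMultipartite

variable {α β : Type*} {G : SimpleGraph α} {H : SimpleGraph β}

theorem vertexMagic_of_isCompleteMultipartite [Fintype α] {A : Type*} [AddCommGroup A]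
    (hG : G.IsCompleteMultipartite) (hA : 2 < Cardinal.mk A) : vertexMagic G A := by
  have : Nontrivial A := Cardinal.one_lt_iff_nontrivial.mp (Cardinal.one_lt_two.trans hA)
  obtain ⟨a, ha⟩ := exists_ne (0 : A)
  obtain ⟨l, hl, hpart⟩ := exists_forall_ne_zero_and_forall_sum_class_eq hA ha hG.setoid
  refine ⟨l, ∑ u, l u - a, hl, fun v => ?_⟩
  have hnonadj : ∑ u with ¬ G.Adj v u, l u = a := by convert hpart v
  rw [← Finset.sum_filter, eq_sub_iff_add_eq, ← hnonadj, Finset.sum_filter_add_sum_filter_not]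

theorem isCompleteMultipartite_top : (⊤ : SimpleGraph α).IsCompleteMultipartite :=
  ⟨by simp⟩

theorem isCompleteMultipartite_graphJoin (hG : G.IsCompleteMultipartite)
    (hH : H.IsCompleteMultipartite) : (graphJoin G H).IsCompleteMultipartite where
  trans
    | .inl u, .inl v, .inl w => hG.trans u v w
    | .inr u, .inr v, .inr w => hH.trans u v w
    | .inl _, .inr _, _ | .inr _, .inl _, _ => fun h _ => absurd trivial h
    | _, .inl _, .inr _ | _, .inr _, .inl _ => fun _ h => absurd trivial h

theorem stmt_5_general [Fintype α] [Fintype β] (hG : G.IsCompleteMultipartite)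
    (hH : H.IsCompleteMultipartite) (A : Type*) [AddCommGroup A] (hA : 2 < Cardinal.mk A) :
    vertexMagic (graphJoin G H) A :=
  vertexMagic_of_isCompleteMultipartite (isCompleteMultipartite_graphJoin hG hH) hA

end CompleteMultipartite

theorem stmt_5 {m : ℕ} (nn : Fin m → ℕ) (hn : ∀ i, 0 < nn i) (n : ℕ)
    (A : Type*) [AddCommGroup A] (hA : 2 < Cardinal.mk A) :
    vertexMagic
      (graphJoin (SimpleGraph.completeMultipartiteGraph (fun i : Fin m => Fin (nn i)))
        (⊤ : SimpleGraph (Fin n))) A :=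
  stmt_5_general (SimpleGraph.completeMultipartiteGraph.isCompleteMultipartite _)
    isCompleteMultipartite_top A hA
end

section
/- Let A be an Abelian group with |A| > 2, let H be a simple graph on k vertices, and for each j = 1,...,k let G_j = K_{n_j}^c be the edgeless graph on n_j vertices with n_j > 1. Then the H-join G = H[G_1, G_2, ..., G_k] is A-vertex magic. -/
open scoped Classical

/-- The `H`-join `H[G_1, …, G_k]` of a family of graphs `Gs i` along a graph `H`:
each vertex `i` of `H` is replaced by the graph `Gs i`, and every vertex of `Gs i` is
joined to every vertex of `Gs j` whenever `i` and `j` are adjacent in `H`. -/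
def hJoin {ι : Type*} (H : SimpleGraph ι) {V : ι → Type*}
    (Gs : ∀ i, SimpleGraph (V i)) : SimpleGraph (Σ i, V i) where
  Adj x y := H.Adj x.1 y.1 ∨ ∃ h : x.1 = y.1, (Gs y.1).Adj (h ▸ x.2) y.2
  symm := by
    constructor
    rintro ⟨i, a⟩ ⟨j, b⟩ (h | ⟨h, hadj⟩)
    · exact Or.inl h.symm
    · dsimp only at h
      subst h
      exact Or.inr ⟨rfl, hadj.symm⟩
  loopless := by
    constructor
    rintro ⟨i, a⟩ (h | ⟨h, hadj⟩)
    · exact H.loopless.irrefl i h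
    · exact (Gs i).loopless.irrefl a hadj

/-!
A vertex in the part `i` of an `H`-join sees its neighbors inside that part together with all the
vertices of the parts adjacent to `i`. So if the labels of each part have total `0`, the rest of
the graph contributes nothing to its weight. Zero-sum labelings by nonzero elements exist on any
finite set with two distinct points `x`, `y`: label the other points arbitrarily, with sum `r`, and
then choose the label of `x` different from `0` and from `-r`, so that the label forced on `y` is
nonzero.
-/

section hJoin

variable {ι : Type*} {H : SimpleGraph ι} {V : ι → Type*} {Gs : ∀ i, SimpleGraph (V i)}

theorem hJoin_adj_mk_same {i : ι} {a b : V i} :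
    (hJoin H Gs).Adj ⟨i, a⟩ ⟨i, b⟩ ↔ (Gs i).Adj a b := by
  simp [hJoin]

theorem hJoin_adj_mk_of_ne {i j : ι} (hij : i ≠ j) {a : V i} {b : V j} :
    (hJoin H Gs).Adj ⟨i, a⟩ ⟨j, b⟩ ↔ H.Adj i j := by
  simp [hJoin, hij]

variable [Fintype ι] [∀ i, Fintype (V i)] {A : Type*}

theorem sum_hJoin_adj_of_sum_eq_zero [AddCommMonoid A] {l : ∀ i, V i → A}
    (hl : ∀ i, ∑ a, l i a = 0) (i : ι) (a : V i) :
    (∑ y : Σ j, V j, if (hJoin H Gs).Adj ⟨i, a⟩ y then l y.1 y.2 else 0) =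
      ∑ b, if (Gs i).Adj a b then l i b else 0 := by
  rw [Fintype.sum_sigma, Fintype.sum_eq_single i]
  · simp only [hJoin_adj_mk_same]
  · intro j hji
    by_cases hadj : H.Adj i j
    · simp only [hJoin_adj_mk_of_ne hji.symm, hadj, if_true, hl]
    · simp only [hJoin_adj_mk_of_ne hji.symm, hadj, if_false, Finset.sum_const_zero]

theorem vertexMagic_hJoin_of_sum_eq_zero [AddCommGroup A] {l : ∀ i, V i → A} {μ : A}
    (hl_ne : ∀ i a, l i a ≠ 0) (hl_sum : ∀ i, ∑ a, l i a = 0)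
    (hl_weight : ∀ i a, (∑ b, if (Gs i).Adj a b then l i b else 0) = μ) :
    vertexMagic (hJoin H Gs) A :=
  ⟨fun x => l x.1 x.2, μ, fun x => hl_ne x.1 x.2, fun x =>
    (sum_hJoin_adj_of_sum_eq_zero hl_sum x.1 x.2).trans (hl_weight x.1 x.2)⟩

end hJoin

theorem exists_forall_ne_zero_and_sum_eq_s6 {α A : Type*} [Fintype α] [Nontrivial α]
    [AddCommGroup A] (hA : 2 < Cardinal.mk A) (c : A) :
    ∃ f : α → A, (∀ x, f x ≠ 0) ∧ ∑ x, f x = c := by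
  have exists_avoiding (d : A) : ∃ a : A, a ≠ 0 ∧ a ≠ d :=
    Cardinal.exists_ne_ne_of_three_le
      (two_add_one_eq_three (R := Cardinal) ▸ Cardinal.add_one_le_of_lt hA) 0 d
  obtain ⟨x, y, hxy⟩ := exists_pair_ne α
  obtain ⟨a, ha, -⟩ := exists_avoiding 0
  let r : A := ∑ _z ∈ (Finset.univ \ {y}) \ {x}, a
  obtain ⟨b, hb, hbr⟩ := exists_avoiding (c - r)
  let g : α → A := Function.update (fun _ => a) x b
  have sum_g : ∑ z ∈ Finset.univ \ {y}, g z = b + r :=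
    Finset.sum_update_of_mem (by simp [hxy]) _ _
  have last_ne_zero : c - (b + r) ≠ 0 := fun h =>
    hbr (eq_sub_of_add_eq (sub_eq_zero.mp h).symm)
  refine ⟨Function.update g y (c - (b + r)), fun z => ?_, ?_⟩
  · simp only [g, Function.update_apply]
    split_ifs
    exacts [last_ne_zero, hb, ha]
  · rw [Finset.sum_update_of_mem (Finset.mem_univ y), sum_g, sub_add_cancel]

theorem stmt_6_general {ι : Type*} [Fintype ι] (H : SimpleGraph ι) (V : ι → Type*)
    [∀ i, Fintype (V i)] [∀ i, Nontrivial (V i)] (A : Type*) [AddCommGroup A]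
    (hA : 2 < Cardinal.mk A) :
    vertexMagic (hJoin H (fun i => (⊥ : SimpleGraph (V i)))) A := by
  choose l hl_ne hl_sum using fun i => exists_forall_ne_zero_and_sum_eq_s6 (α := V i) hA 0
  exact vertexMagic_hJoin_of_sum_eq_zero (μ := 0) hl_ne hl_sum (by simp)

theorem stmt_6 {k : ℕ} (H : SimpleGraph (Fin k)) (n : Fin k → ℕ) (hn : ∀ j, 1 < n j)
    (A : Type*) [AddCommGroup A] (hA : 2 < Cardinal.mk A) :
    vertexMagic (hJoin H (fun j : Fin k => (⊥ : SimpleGraph (Fin (n j))))) A := by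
  have (j : Fin k) : Nontrivial (Fin (n j)) := Fin.nontrivial_iff_two_le.mpr (hn j)
  exact stmt_6_general H (fun j => Fin (n j)) A hA
end

section
/- Let A be an Abelian group with |A| > 2 and let G be a finite simple graph with reduced graph H. Then G is A-vertex magic if and only if H is A'-magic. -/
open scoped Classical

/-- The reduced graph of `G` is `A'`-magic if there is a labeling of its vertices
(the equivalence classes of `∼_G`) by elements of `A`, where the label `0` is permitted
on a class only when the class has at least two elements, such that the sum of the labels
over each open neighborhood in the reduced graph is a constant `μ`. -/
def reducedGraphAPrimeMagic {V : Type*} [Fintype V] (G : SimpleGraph V)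
    (A : Type*) [AddCommGroup A] : Prop :=
  ∃ (l : Quotient (nbhdSetoid G) → A) (μ : A),
    (∀ x : Quotient (nbhdSetoid G), l x = 0 →
      2 ≤ Nat.card {u : V // Quotient.mk (nbhdSetoid G) u = x}) ∧
    ∀ x : Quotient (nbhdSetoid G),
      (∑ y : Quotient (nbhdSetoid G), if (reducedGraph G).Adj x y then l y else 0) = μ

/-!
Equivalent vertices have the same neighbors, so a neighborhood in `G` is a union of classes, and
the neighborhood sum of a labeling `l` at `v` is the neighborhood sum in the reduced graph, at the
class of `v`, of the labeling by class sums of `l`. It remains to see which labelings of the classes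
arise as class sums of nonzero labels. A class sum of a single nonzero label is nonzero. Conversely,
when `2 < |A|`, there is always a nonzero `x` different from `a`, and `a = x + (a - x)` lets one
split off nonzero labels one at a time until a single nonzero label is left.
-/

section NonzeroLabels

variable {ι κ A : Type*}

theorem one_lt_card_of_sum_eq_zero [AddCommMonoid A] {s : Finset ι} {f : ι → A}
    (hs : s.Nonempty) (hf : ∀ i ∈ s, f i ≠ 0) (hsum : ∑ i ∈ s, f i = 0) : 1 < s.card := by
  refine lt_of_le_of_ne' hs.card_pos fun hcard => ?_
  obtain ⟨i, rfl⟩ := Finset.card_eq_one.mp hcard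
  exact hf i (Finset.mem_singleton_self i) (by rwa [Finset.sum_singleton] at hsum)

theorem exists_ne_zero_sum_eq [AddCommGroup A] (hA : 2 < Cardinal.mk A) {s : Finset ι}
    (hs : s.Nonempty) {a : A} (ha : a = 0 → 1 < s.card) :
    ∃ f : ι → A, (∀ i, f i ≠ 0) ∧ ∑ i ∈ s, f i = a := by
  induction hs using Finset.Nonempty.cons_induction generalizing a with
  | singleton i =>
    exact ⟨fun _ => a, fun _ h => (ha h).ne' (Finset.card_singleton i), Finset.sum_singleton _ _⟩
  | cons i s hi _ ih =>
    obtain ⟨x, hx⟩ := Cardinal.exists_notMem_of_length_lt [0, a] hA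
    obtain ⟨hx₀, hxa⟩ : x ≠ 0 ∧ x ≠ a := by simpa using hx
    obtain ⟨f, hf, hfs⟩ := ih (a := a - x) fun h => (hxa (sub_eq_zero.mp h).symm).elim
    refine ⟨Function.update f i x, fun j => ?_, ?_⟩
    · rcases eq_or_ne j i with rfl | hji
      · rwa [Function.update_self]
      · rw [Function.update_of_ne hji]
        exact hf j
    · rw [Finset.sum_cons, Function.update_self, Finset.sum_update_of_notMem hi, hfs,
        add_sub_cancel]

variable [Fintype ι] [DecidableEq κ]

theorem exists_ne_zero_sum_fiber_eq [AddCommGroup A] (hA : 2 < Cardinal.mk A) {q : ι → κ}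
    (hq : Function.Surjective q) {m : κ → A}
    (hm : ∀ k, m k = 0 → 1 < (Finset.univ.filter (q · = k)).card) :
    ∃ l : ι → A, (∀ i, l i ≠ 0) ∧ ∀ k, ∑ i with q i = k, l i = m k := by
  have hfiber (k : κ) : (Finset.univ.filter (q · = k)).Nonempty := by
    obtain ⟨i, hi⟩ := hq k
    exact ⟨i, (Finset.mem_filter_univ i).mpr hi⟩
  choose f hf hfm using fun k => exists_ne_zero_sum_eq hA (hfiber k) (hm k)
  refine ⟨fun i => f (q i) i, fun i => hf (q i) i, fun k => ?_⟩
  rw [← hfm k]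
  exact Finset.sum_congr rfl fun i hi => by simp only [(Finset.mem_filter_univ i).mp hi]

theorem sum_ite_comp_eq_sum_ite_sum_fiber [Fintype κ] [AddCommMonoid A] (q : ι → κ)
    (p : κ → Prop) [DecidablePred p] (l : ι → A) :
    ∑ i, (if p (q i) then l i else 0) = ∑ k, if p k then ∑ i with q i = k, l i else 0 := by
  rw [← Finset.sum_fiberwise Finset.univ q]
  refine Finset.sum_congr rfl fun k _ => ?_
  calc ∑ i with q i = k, (if p (q i) then l i else 0)
      = ∑ i with q i = k, if p k then l i else 0 :=
        Finset.sum_congr rfl fun i hi => by simp only [(Finset.mem_filter_univ i).mp hi]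
    _ = if p k then ∑ i with q i = k, l i else 0 := by
        split_ifs <;> simp only [Finset.sum_const_zero]

end NonzeroLabels

section ReducedGraph

variable {V : Type*} (G : SimpleGraph V)

theorem reducedGraph_adj_mk {u v : V} :
    (reducedGraph G).Adj (Quotient.mk _ u) (Quotient.mk _ v) ↔ G.Adj u v := by
  refine ⟨?_, fun h => ⟨u, v, rfl, rfl, h⟩⟩
  rintro ⟨u', v', hu, hv, h⟩
  have hu : G.neighborSet u' = G.neighborSet u := Quotient.exact hu
  have hv : G.neighborSet v' = G.neighborSet v := Quotient.exact hv
  have huv' : G.Adj u v' := by rwa [← G.mem_neighborSet, ← hu]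
  have hvu : G.Adj v u := by rw [← G.mem_neighborSet, ← hv]; exact huv'.symm
  exact hvu.symm

variable [Fintype V]

theorem sum_reducedGraph_adj_sum_class {A : Type*} [AddCommMonoid A] (l : V → A) (v : V) :
    (∑ y, if (reducedGraph G).Adj (Quotient.mk _ v) y then
      ∑ u with Quotient.mk (nbhdSetoid G) u = y, l u else 0) =
      ∑ u, if G.Adj v u then l u else 0 := by
  rw [← sum_ite_comp_eq_sum_ite_sum_fiber]
  exact Finset.sum_congr rfl fun u _ => if_congr (reducedGraph_adj_mk G) rfl rfl

theorem natCard_class_eq_card_filter (x : Quotient (nbhdSetoid G)) :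
    Nat.card {u : V // Quotient.mk (nbhdSetoid G) u = x} =
      (Finset.univ.filter (Quotient.mk (nbhdSetoid G) · = x)).card :=
  Nat.subtype_card _ Finset.mem_filter_univ

theorem reducedGraphAPrimeMagic_of_vertexMagic {A : Type*} [AddCommGroup A]
    (h : vertexMagic G A) : reducedGraphAPrimeMagic G A := by
  obtain ⟨l, μ, hl, hμ⟩ := h
  refine ⟨fun x => ∑ u with Quotient.mk _ u = x, l u, μ, fun x hx => ?_, fun x => ?_⟩
  · obtain ⟨v, rfl⟩ := x.exists_rep
    rw [natCard_class_eq_card_filter]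
    exact one_lt_card_of_sum_eq_zero ⟨v, (Finset.mem_filter_univ v).mpr rfl⟩ (fun u _ => hl u) hx
  · obtain ⟨v, rfl⟩ := x.exists_rep
    exact (sum_reducedGraph_adj_sum_class G l v).trans (hμ v)

theorem vertexMagic_of_reducedGraphAPrimeMagic {A : Type*} [AddCommGroup A]
    (hA : 2 < Cardinal.mk A) (h : reducedGraphAPrimeMagic G A) : vertexMagic G A := by
  obtain ⟨m, μ, hm, hμ⟩ := h
  simp only [natCard_class_eq_card_filter] at hm
  obtain ⟨l, hl, hlm⟩ := exists_ne_zero_sum_fiber_eq hA Quotient.mk_surjective hm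
  obtain rfl : (fun x => ∑ u with Quotient.mk _ u = x, l u) = m := funext hlm
  exact ⟨l, μ, hl, fun v => (sum_reducedGraph_adj_sum_class G l v).symm.trans (hμ _)⟩

end ReducedGraph

theorem stmt_10 {V : Type*} [Fintype V] (G : SimpleGraph V)
    (A : Type*) [AddCommGroup A] (hA : 2 < Cardinal.mk A) :
    vertexMagic G A ↔ reducedGraphAPrimeMagic G A :=
  ⟨reducedGraphAPrimeMagic_of_vertexMagic G, vertexMagic_of_reducedGraphAPrimeMagic G hA⟩
end

section
/- Let A be an Abelian group with |A| > 2. Every finite simple graph H' is an induced subgraph of some A-vertex magic graph G; moreover G can be chosen with |V(G)| ≤ 2|V(H')|. -/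
/-!
Replace every vertex of the given graph by two non-adjacent twins and label the twins `a` and `-a`
for some `a ≠ 0`. A vertex adjacent to one twin is adjacent to the other, so all weights vanish.
-/

open scoped Classical

/-- The double graph of `G`: each vertex `w` is replaced by the two twins `(w, true)` and
`(w, false)`, which are non-adjacent and have the same neighbors. -/
def doubleGraph {W : Type*} (G : SimpleGraph W) : SimpleGraph (W × Bool) :=
  G.comap Prod.fst

namespace doubleGraph

/-- The copy of `G` inside its double graph formed by the twins tagged `true`. -/
def inducedCopy {W : Type*} (G : SimpleGraph W) : G ↪g doubleGraph G where
  toFun w := (w, true)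
  inj' := Prod.mk_left_injective true
  map_rel_iff' := Iff.rfl

end doubleGraph

theorem vertexMagic_comap_of_sum_fiber_eq_zero {V W A : Type*} [Fintype V] [AddCommGroup A]
    (G : SimpleGraph W) (f : V → W) {l : V → A} (hl : ∀ v, l v ≠ 0)
    (hfiber : ∀ w, ∑ v with f v = w, l v = 0) : vertexMagic (G.comap f) A := by
  have fiber_weight (v : V) (w : W) :
      (∑ u with f u = w, if G.Adj (f v) (f u) then l u else 0) = 0 := by
    calc (∑ u with f u = w, if G.Adj (f v) (f u) then l u else 0)
        = ∑ u with f u = w, if G.Adj (f v) w then l u else 0 :=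
          Finset.sum_congr rfl fun u hu => by rw [(Finset.mem_filter.mp hu).2]
      _ = 0 := by split_ifs <;> simp only [hfiber, Finset.sum_const_zero]
  refine ⟨l, 0, hl, fun v => ?_⟩
  rw [← Finset.sum_fiberwise_of_maps_to fun u _ => Finset.mem_image_of_mem f (Finset.mem_univ u)]
  exact Finset.sum_eq_zero fun w _ => fiber_weight v w

theorem vertexMagic_doubleGraph {W : Type*} [Fintype W] (G : SimpleGraph W) (A : Type*)
    [AddCommGroup A] [Nontrivial A] : vertexMagic (doubleGraph G) A := by
  obtain ⟨a, ha⟩ := exists_ne (0 : A)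
  refine vertexMagic_comap_of_sum_fiber_eq_zero G Prod.fst
    (l := fun x => if x.2 then a else -a) ?_ ?_
  · rintro ⟨w, _ | _⟩ <;> simp [ha]
  · intro w
    simp [Finset.sum_filter, Fintype.sum_prod_type]

theorem stmt_13_general (A : Type*) [AddCommGroup A] [Nontrivial A]
    {W : Type*} [Fintype W] (H' : SimpleGraph W) :
    ∃ (U : Type) (instU : Fintype U) (G : SimpleGraph U) (_ : H' ↪g G),
      @vertexMagic U instU G A _ ∧ @Fintype.card U instU ≤ 2 * Fintype.card W := by
  let F := H'.overFin rfl
  let copy : H' ↪g doubleGraph F :=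
    (doubleGraph.inducedCopy F).comp (H'.overFinIso rfl).toEmbedding
  refine ⟨Fin (Fintype.card W) × Bool, inferInstance, doubleGraph F, copy,
    vertexMagic_doubleGraph F A, ?_⟩
  simp [mul_comm]

theorem stmt_13 (A : Type*) [AddCommGroup A] (hA : 2 < Cardinal.mk A)
    {W : Type*} [Fintype W] (H' : SimpleGraph W) :
    ∃ (U : Type) (instU : Fintype U) (G : SimpleGraph U) (_ : H' ↪g G),
      @vertexMagic U instU G A _ ∧ @Fintype.card U instU ≤ 2 * Fintype.card W := by
  have : Nontrivial A := Cardinal.one_lt_iff_nontrivial.mp (Cardinal.one_lt_two.trans hA)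
  exact stmt_13_general A H'
end

section
/- Let n ≡ 1 or 3 (mod 4) with n ≥ 3, let m ≥ 1, and let A be a non-trivial Abelian group. The generalised friendship graph f_{n,m} is A-vertex magic if and only if A contains an element a whose order does not divide 2m − 1 (equivalently, A is not isomorphic to a product ∏ Z_{m_i} with every m_i dividing 2m − 1). -/
open scoped Classical

/-- The generalised friendship graph `f_{n,m}`: `m` cycles of length `n` all meeting at a
single common vertex (the vertex `none`) and otherwise pairwise disjoint.  The vertices of
the `i`-th cycle other than the common vertex are `some (i, 0), …, some (i, n - 2)`, laid
out consecutively along the cycle with both ends joined to the common vertex. -/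
def genFriendshipGraph (n m : ℕ) : SimpleGraph (Option (Fin m × Fin (n - 1))) where
  Adj x y :=
    match x, y with
    | none, none => False
    | none, some (_, j) => j.val = 0 ∨ j.val = n - 2
    | some (_, j), none => j.val = 0 ∨ j.val = n - 2
    | some (i, j), some (i', j') => i = i' ∧ (j.val + 1 = j'.val ∨ j'.val + 1 = j.val)
  symm := by
    constructor
    rintro (_ | ⟨i, j⟩) (_ | ⟨i', j'⟩) h <;> simp_all; tauto
  loopless := by
    constructor
    rintro (_ | ⟨i, j⟩) h <;> simp_all

/-!
Read the labels along one cycle of odd length `n = 2q + 1`, starting and ending at the hub. Labels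
two apart sum to `μ`, so every two steps apply the involution `x ↦ μ - x`. Hence both neighbors of
the hub carry the same label `a`, the image of the hub label under the `q`-th iterate, and `a` is
the same for all cycles. The weight of the hub gives `μ = 2ma`, and the label `μ - a`, which occurs
two steps after `a`, must be nonzero. Conversely, any `a` with `2ma ≠ a` yields a magic labeling
with values in `{a, 2ma - a}`.
-/

section Reflection

variable {A : Type*} [AddCommGroup A] {μ : A}

lemma iterate_sub_left_ne_zero {a : A} (ha : a ≠ 0) (ha' : μ - a ≠ 0) (t : ℕ) :
    (μ - ·)^[t] a ≠ 0 := by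
  induction t generalizing a with
  | zero => exact ha
  | succ _ ih => exact ih ha' (by rwa [sub_sub_cancel])

lemma iterate_sub_left_eq_of_add_eq {f : ℕ → A} {n : ℕ}
    (hf : ∀ k, k + 1 < n → f k + f (k + 2) = μ) (j t : ℕ) (h : j + 2 * t ≤ n) :
    (μ - ·)^[t] (f j) = f (j + 2 * t) := by
  induction t with
  | zero => rfl
  | succ t ih =>
    rw [Function.iterate_succ_apply', ih (by omega)]
    exact sub_eq_of_eq_add' (hf (j + 2 * t) (by omega)).symm

lemma eq_iterate_sub_left_of_closed {f : ℕ → A} {n : ℕ} (hn : Odd n)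
    (hf : ∀ k, k + 1 < n → f k + f (k + 2) = μ) (hclosed : f n = f 0) :
    f 1 = (μ - ·)^[n / 2] (f 0) ∧ f (n - 1) = (μ - ·)^[n / 2] (f 0) := by
  have hn2 : 2 * (n / 2) + 1 = n := Nat.two_mul_div_two_add_one_of_odd hn
  have hinv : Function.LeftInverse (μ - ·) (μ - ·) := sub_sub_cancel μ
  constructor
  · have hlast : (μ - ·)^[n / 2] (f 1) = f 0 := by
      rw [iterate_sub_left_eq_of_add_eq hf 1 _ (by omega), add_comm, hn2, hclosed]
    rw [← hlast, hinv.iterate (n / 2) (f 1)]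
  · rw [iterate_sub_left_eq_of_add_eq hf 0 _ (by omega)]
    congr 1
    omega

/-- The labels in `{a, μ - a}` along a cycle of odd length `n`, with `a` at both neighbors of
position `0` and labels two apart summing to `μ`. Every position is reached in steps of two from
one of these neighbors: from `1` if it is odd, from `n - 1` if it is even. -/
def alternatingSeq (n : ℕ) (μ a : A) (k : ℕ) : A :=
  (μ - ·)^[(if Odd k then k else n - k) / 2] a

lemma alternatingSeq_one (n : ℕ) (μ a : A) : alternatingSeq n μ a 1 = a := by
  simp [alternatingSeq]

lemma alternatingSeq_sub_one {n : ℕ} (hn : Odd n) (μ a : A) :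
    alternatingSeq n μ a (n - 1) = a := by
  have heven : ¬ Odd (n - 1) := Nat.not_odd_iff_even.mpr (hn.tsub_odd odd_one)
  have hexp : (n - (n - 1)) / 2 = 0 := by omega
  rw [alternatingSeq, if_neg heven, hexp, Function.iterate_zero_apply]

lemma alternatingSeq_self {n : ℕ} (hn : Odd n) (μ a : A) :
    alternatingSeq n μ a n = alternatingSeq n μ a 0 := by
  simp [alternatingSeq, hn]

lemma alternatingSeq_add_alternatingSeq {n k : ℕ} (hn : Odd n) (hk : k + 1 < n) (μ a : A) :
    alternatingSeq n μ a k + alternatingSeq n μ a (k + 2) = μ := by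
  unfold alternatingSeq
  obtain heven | hodd := Nat.even_or_odd k
  · have hexp : (n - k) / 2 = (n - (k + 2)) / 2 + 1 := by
      rw [Nat.odd_iff] at hn
      rw [Nat.even_iff] at heven
      omega
    rw [if_neg (Nat.not_odd_iff_even.mpr heven),
      if_neg (Nat.not_odd_iff_even.mpr (heven.add even_two)), hexp,
      Function.iterate_succ_apply', sub_add_cancel]
  · rw [if_pos hodd, if_pos (hodd.add_even even_two), show (k + 2) / 2 = k / 2 + 1 by omega,
      Function.iterate_succ_apply', add_sub_cancel]

lemma alternatingSeq_ne_zero {a : A} (ha : a ≠ 0) (ha' : μ - a ≠ 0) (n k : ℕ) :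
    alternatingSeq n μ a k ≠ 0 :=
  iterate_sub_left_ne_zero ha ha' _

end Reflection

namespace genFriendshipGraph

variable {n m : ℕ}

/-- The `k`-th vertex of the `i`-th cycle of `f_{n,m}`, starting at position `0` from the hub
`none`. All positions `k ≥ n` are sent to the hub, so that position `n` closes the cycle. -/
def cycleVertex (i : Fin m) : ℕ → Option (Fin m × Fin (n - 1))
  | 0 => none
  | k + 1 => if h : k < n - 1 then some (i, ⟨k, h⟩) else none

lemma cycleVertex_succ (i : Fin m) {k : ℕ} (hk : k < n - 1) :
    cycleVertex i (k + 1) = some (i, ⟨k, hk⟩) :=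
  dif_pos hk

lemma cycleVertex_self (hn : 0 < n) (i : Fin m) : cycleVertex (n := n) i n = none := by
  obtain ⟨n, rfl⟩ := Nat.exists_eq_succ_of_ne_zero hn.ne'
  simp [cycleVertex]

lemma adj_cycleVertex_succ_iff (i : Fin m) {k : ℕ} (hk : k + 1 < n)
    (u : Option (Fin m × Fin (n - 1))) :
    (genFriendshipGraph n m).Adj (cycleVertex i (k + 1)) u ↔
      u = cycleVertex i k ∨ u = cycleVertex i (k + 2) := by
  rw [cycleVertex_succ i (by omega)]
  rcases k with _ | k <;> rcases u with _ | ⟨i', j⟩ <;>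
    grind [genFriendshipGraph, cycleVertex]

lemma cycleVertex_ne_cycleVertex_add_two (hn : 3 ≤ n) (i : Fin m) {k : ℕ} (hk : k + 1 < n) :
    cycleVertex (n := n) i k ≠ cycleVertex i (k + 2) := by
  rcases k with _ | k
  · simp [cycleVertex, show 1 < n - 1 by omega]
  · rw [cycleVertex_succ i (by omega), cycleVertex]
    split_ifs <;> simp

variable {A : Type*} [AddCommGroup A]

lemma sum_adj_cycleVertex_succ (hn : 3 ≤ n) (l : Option (Fin m × Fin (n - 1)) → A) (i : Fin m)
    {k : ℕ} (hk : k + 1 < n) :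
    (∑ u, if (genFriendshipGraph n m).Adj (cycleVertex i (k + 1)) u then l u else 0) =
      l (cycleVertex i k) + l (cycleVertex i (k + 2)) := by
  rw [← Finset.sum_pair (cycleVertex_ne_cycleVertex_add_two hn i hk), ← Finset.sum_filter]
  congr 1
  ext u
  simp [adj_cycleVertex_succ_iff i hk]

lemma sum_adj_hub (hn : 3 ≤ n) (l : Option (Fin m × Fin (n - 1)) → A) :
    (∑ u, if (genFriendshipGraph n m).Adj none u then l u else 0) =
      ∑ i, (l (cycleVertex i 1) + l (cycleVertex i (n - 1))) := by
  rw [Fintype.sum_option, if_neg (SimpleGraph.irrefl _), zero_add, Fintype.sum_prod_type]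
  refine Finset.sum_congr rfl fun i _ => ?_
  let first : Fin (n - 1) := ⟨0, by omega⟩
  let last : Fin (n - 1) := ⟨n - 2, by omega⟩
  have hne : first ≠ last := Fin.ne_of_val_ne (show 0 ≠ n - 2 by omega)
  have hfirst : cycleVertex i 1 = some (i, first) := cycleVertex_succ i first.isLt
  have hlast : cycleVertex i (n - 1) = some (i, last) := by
    rw [← cycleVertex_succ i last.isLt, show n - 2 + 1 = n - 1 by omega]
  rw [hfirst, hlast, ← Finset.sum_pair (f := fun j => l (some (i, j))) hne, ← Finset.sum_filter]
  congr 1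
  ext j
  simp [genFriendshipGraph, first, last, Fin.ext_iff]

lemma vertexMagic_iff (hn : 3 ≤ n) :
    vertexMagic (genFriendshipGraph n m) A ↔
      ∃ (l : Option (Fin m × Fin (n - 1)) → A) (μ : A), (∀ v, l v ≠ 0) ∧
        ∑ i, (l (cycleVertex i 1) + l (cycleVertex i (n - 1))) = μ ∧
        ∀ i k, k + 1 < n → l (cycleVertex i k) + l (cycleVertex i (k + 2)) = μ := by
  refine exists₂_congr fun l μ => and_congr_right fun _ => ?_
  rw [Option.forall, sum_adj_hub hn, Prod.forall]
  refine and_congr_right fun _ => forall_congr' fun i => ⟨fun h k hk => ?_, fun h j => ?_⟩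
  · rw [← sum_adj_cycleVertex_succ hn l i hk, cycleVertex_succ i (by omega), h]
  · rw [← h j (by omega), ← sum_adj_cycleVertex_succ hn l i (by omega), cycleVertex_succ i j.isLt]

lemma exists_two_mul_nsmul_ne_of_vertexMagic (hn : Odd n) (hn3 : 3 ≤ n) (hm : 0 < m)
    (h : vertexMagic (genFriendshipGraph n m) A) : ∃ a : A, (2 * m) • a ≠ a := by
  obtain ⟨l, μ, hl, hhub, hcycle⟩ := (vertexMagic_iff hn3).mp h
  set a := (μ - ·)^[n / 2] (l none)
  have hends (i : Fin m) : l (cycleVertex i 1) = a ∧ l (cycleVertex i (n - 1)) = a :=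
    eq_iterate_sub_left_of_closed (f := l ∘ cycleVertex i) hn (hcycle i)
      (congrArg l (cycleVertex_self (by omega) i))
  have hμ : (2 * m) • a = μ := by
    rw [← hhub]
    simp [hends, mul_nsmul, two_nsmul]
  have hthree : a + l (cycleVertex ⟨0, hm⟩ 3) = μ := by
    rw [← (hends ⟨0, hm⟩).1]
    exact hcycle _ 1 (by omega)
  refine ⟨a, fun ha => hl (cycleVertex ⟨0, hm⟩ 3) ?_⟩
  rwa [← hμ, ha, add_eq_left] at hthree

/-- The labeling of `f_{n,m}` that reads the sequence `f` along every cycle, starting with `f 0`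
at the hub. -/
def labelingOfSeq {α : Type*} (f : ℕ → α) : Option (Fin m × Fin (n - 1)) → α
  | none => f 0
  | some (_, j) => f (j + 1)

lemma labelingOfSeq_cycleVertex {α : Type*} {f : ℕ → α} (hf : f n = f 0) (i : Fin m) {k : ℕ}
    (hk : k ≤ n) : labelingOfSeq f (cycleVertex (n := n) i k) = f k := by
  rcases k with _ | k
  · rfl
  · obtain rfl | hlt := hk.eq_or_lt
    · rw [cycleVertex_self k.succ_pos, hf, labelingOfSeq]
    · rw [cycleVertex_succ i (by omega), labelingOfSeq]

lemma vertexMagic_of_two_mul_nsmul_ne (hn : Odd n) (hn3 : 3 ≤ n) {a : A}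
    (ha : (2 * m) • a ≠ a) : vertexMagic (genFriendshipGraph n m) A := by
  set μ := (2 * m) • a
  have ha0 : a ≠ 0 := fun h => ha (by simp [μ, h])
  have hlabel (i : Fin m) {k : ℕ} (hk : k ≤ n) :
      labelingOfSeq (alternatingSeq n μ a) (cycleVertex (n := n) i k) = alternatingSeq n μ a k :=
    labelingOfSeq_cycleVertex (alternatingSeq_self hn μ a) i hk
  refine (vertexMagic_iff hn3).mpr
    ⟨labelingOfSeq (alternatingSeq n μ a), μ, ?_, ?_, fun i k hk => ?_⟩
  · rintro (_ | _) <;> exact alternatingSeq_ne_zero ha0 (sub_ne_zero.mpr ha) _ _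
  · simp_rw [hlabel _ (show 1 ≤ n by omega), hlabel _ (n.sub_le 1), alternatingSeq_one,
      alternatingSeq_sub_one hn]
    simp [μ, mul_nsmul, two_nsmul]
  · rw [hlabel i (by omega), hlabel i (by omega), alternatingSeq_add_alternatingSeq hn hk]

end genFriendshipGraph

lemma addOrderOf_dvd_sub_one_iff {A : Type*} [AddLeftCancelMonoid A] {k : ℕ} (hk : 1 ≤ k)
    (a : A) : addOrderOf a ∣ k - 1 ↔ k • a = a := by
  rw [← Nat.modEq_iff_dvd' hk, ← nsmul_eq_nsmul_iff_modEq, one_nsmul, eq_comm]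

theorem stmt_15 (n m : ℕ) (hn : n % 4 = 1 ∨ n % 4 = 3) (hn3 : 3 ≤ n) (hm : 1 ≤ m)
    (A : Type*) [AddCommGroup A] (hA : Nontrivial A) :
    vertexMagic (genFriendshipGraph n m) A ↔
      ∃ a : A, ¬ addOrderOf a ∣ 2 * m - 1 := by
  have hodd : Odd n := Nat.odd_iff.mpr (by omega)
  simp only [addOrderOf_dvd_sub_one_iff (show 1 ≤ 2 * m by omega)]
  exact ⟨genFriendshipGraph.exists_two_mul_nsmul_ne_of_vertexMagic hodd hn3 hm,
    fun ⟨_, ha⟩ => genFriendshipGraph.vertexMagic_of_two_mul_nsmul_ne hodd hn3 ha⟩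
end

section
/- Let n ≡ 2 (mod 4) with n ≥ 6 and m ≥ 1. The generalised friendship graph f_{n,m} is group vertex magic (A-vertex magic for every non-trivial Abelian group A) if and only if m ≡ 1 (mod 3). -/
open scoped Classical

/-!
Go once around a cycle from the common vertex: the vertex condition says that the labels
`f 0, f 1, …, f n` met on the way satisfy `f k + f (k + 2) = μ`. Hence `f` has period `4`, and for
`n ≡ 2 (mod 4)` closing up, `f n = f 0 = c`, forces `μ = 2c`, so the labels repeat the pattern
`c, x, c, 2c - x`. With one parameter `xᵢ` per cycle, the condition at the common vertex reads
`∑ 2xᵢ = 2c`, where `xᵢ ∉ {0, 2c}` and `c ≠ 0`. In a group of order `3` this leaves only `xᵢ = c`,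
so `2mc = 2c` and `m ≡ 1 (mod 3)`; conversely `xᵢ = c` works if `3A = 0` and `m ≡ 1 (mod 3)`. If
`3a ≠ 0` for some `a`, every `m ≥ 1` works: either `A` has an element `c` of order `2` and `xᵢ = c`,
or `4a ≠ 0` and, with `c = a`, pairs `c, -c` are added to the solution `c` or `3c, -2c`.
-/

section

variable {A M : Type*} [AddCommGroup A] [AddCommMonoid M] {n m : ℕ}

theorem sum_ite_of_iff_eq_or_eq {α : Type*} [Fintype α] {p : α → Prop}
    [DecidablePred p] {a b : α} (hab : a ≠ b) (hp : ∀ u, p u ↔ u = a ∨ u = b) (f : α → M) :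
    (∑ u, if p u then f u else 0) = f a + f b := by
  have hfilter : Finset.univ.filter p = {a, b} := by ext u; simp [hp]
  rw [← Finset.sum_filter, hfilter, Finset.sum_pair hab]

/-- The `k`-th vertex of the closed walk of length `n` that starts at the common vertex of
`genFriendshipGraph n m` and goes around the `i`-th cycle. It is the common vertex at `k = 0` and
at every `k ≥ n`. -/
def petalVertex (n : ℕ) (i : Fin m) : ℕ → Option (Fin m × Fin (n - 1))
  | 0 => none
  | k + 1 => if h : k < n - 1 then some (i, ⟨k, h⟩) else none

theorem petalVertex_eq_none_iff {i : Fin m} {k : ℕ} :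
    petalVertex n i k = none ↔ k = 0 ∨ n ≤ k := by
  rcases k with _ | k
  · simp [petalVertex]
  · simp only [petalVertex, dite_eq_right_iff, reduceCtorEq, imp_false, false_or]
    omega

theorem petalVertex_eq_some_iff {i i' : Fin m} {j : Fin (n - 1)} {k : ℕ} :
    petalVertex n i k = some (i', j) ↔ i = i' ∧ k = j + 1 := by
  rcases k with _ | k
  · simp [petalVertex]
  · simp only [petalVertex, Option.dite_none_right_eq_some, Option.some.injEq, Prod.mk.injEq,
      Fin.ext_iff, exists_and_left, exists_prop]
    omega

theorem petalVertex_zero (i : Fin m) : petalVertex n i 0 = none := rfl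

theorem petalVertex_self (i : Fin m) : petalVertex n i n = none :=
  petalVertex_eq_none_iff.2 (.inr le_rfl)

theorem petalVertex_ne_add_two (hn : 3 ≤ n) (i : Fin m) (j : Fin (n - 1)) :
    petalVertex n i j ≠ petalVertex n i (j + 2) := by
  intro h
  rcases hj : petalVertex n i j with _ | ⟨i', j'⟩
  · have hnext := petalVertex_eq_none_iff.1 (h ▸ hj)
    rw [petalVertex_eq_none_iff] at hj
    omega
  · have hnext := petalVertex_eq_some_iff.1 (h ▸ hj)
    rw [petalVertex_eq_some_iff] at hj
    omega

theorem genFriendshipGraph_adj_some_iff (i : Fin m) (j : Fin (n - 1))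
    (v : Option (Fin m × Fin (n - 1))) :
    (genFriendshipGraph n m).Adj (some (i, j)) v ↔
      v = petalVertex n i j ∨ v = petalVertex n i (j + 2) := by
  rcases v with _ | ⟨i', j'⟩
  · simp only [genFriendshipGraph, eq_comm (a := none), petalVertex_eq_none_iff]
    omega
  · simp only [genFriendshipGraph, eq_comm (a := some _), petalVertex_eq_some_iff]
    omega

theorem sum_adj_some (hn : 3 ≤ n) (l : Option (Fin m × Fin (n - 1)) → M) (i : Fin m)
    (j : Fin (n - 1)) :
    (∑ u, if (genFriendshipGraph n m).Adj (some (i, j)) u then l u else 0) =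
      l (petalVertex n i j) + l (petalVertex n i (j + 2)) :=
  sum_ite_of_iff_eq_or_eq (petalVertex_ne_add_two hn i j) (genFriendshipGraph_adj_some_iff i j) l

theorem sum_adj_none (hn : 3 ≤ n) (l : Option (Fin m × Fin (n - 1)) → M) :
    (∑ u, if (genFriendshipGraph n m).Adj none u then l u else 0) =
      ∑ i, (l (petalVertex n i 1) + l (petalVertex n i (n - 1))) := by
  rw [Fintype.sum_option, if_neg (SimpleGraph.irrefl _), zero_add, Fintype.sum_prod_type]
  refine Finset.sum_congr rfl fun i _ => ?_
  let first : Fin (n - 1) := ⟨0, by omega⟩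
  let last : Fin (n - 1) := ⟨n - 2, by omega⟩
  have hne : first ≠ last := by simp only [first, last, ne_eq, Fin.mk.injEq]; omega
  have hfirst : petalVertex n i 1 = some (i, first) := petalVertex_eq_some_iff.2 ⟨rfl, rfl⟩
  have hlast : petalVertex n i (n - 1) = some (i, last) :=
    petalVertex_eq_some_iff.2 ⟨rfl, by simp only [last]; omega⟩
  rw [hfirst, hlast]
  refine sum_ite_of_iff_eq_or_eq hne (fun j => ?_) fun j => l (some (i, j))
  simp [genFriendshipGraph, first, last, Fin.ext_iff]

theorem forall_sum_adj_eq_iff (hn : 3 ≤ n) (l : Option (Fin m × Fin (n - 1)) → M) (μ : M) :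
    (∀ v, (∑ u, if (genFriendshipGraph n m).Adj v u then l u else 0) = μ) ↔
      ∑ i, (l (petalVertex n i 1) + l (petalVertex n i (n - 1))) = μ ∧
        ∀ i k, k + 2 ≤ n → l (petalVertex n i k) + l (petalVertex n i (k + 2)) = μ := by
  simp only [Option.forall, Prod.forall, sum_adj_none hn, sum_adj_some hn, Fin.forall_iff]
  refine and_congr_right fun _ => forall₃_congr fun i hi k => ?_
  rw [show k < n - 1 ↔ k + 2 ≤ n by omega]

theorem apply_add_four_mul_of_add_eq {B : Type*} [AddCancelCommMonoid B] {f : ℕ → B} {μ : B}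
    (hf : ∀ k, k + 2 ≤ n → f k + f (k + 2) = μ) {k t : ℕ} (hkt : k + 4 * t ≤ n) :
    f (k + 4 * t) = f k := by
  induction t with
  | zero => rfl
  | succ t ih =>
    have hfirst := hf (k + 4 * t) (by omega)
    have hsecond := hf (k + 4 * t + 2) (by omega)
    rw [ih (by omega)] at hfirst
    exact add_left_cancel (hsecond.trans (hfirst.symm.trans (add_comm _ _)))

/-- The data determining a magic labeling of `genFriendshipGraph n m` for `n ≡ 2 (mod 4)`: the
label `c` of the common vertex and, for each cycle `i`, the label `x i` of the vertex that follows
the common vertex. Around that cycle the labels are `c, x i, c, 2c - x i`, repeated. -/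
structure IsPetalLabeling {ι : Type*} [Fintype ι] (c : A) (x : ι → A) : Prop where
  center_ne_zero : c ≠ 0
  ne_zero : ∀ i, x i ≠ 0
  ne_two_nsmul : ∀ i, x i ≠ 2 • c
  sum_eq : ∑ i, 2 • x i = 2 • c

theorem exists_isPetalLabeling_of_vertexMagic (hn : n % 4 = 2) (hn3 : 3 ≤ n) (hm : 1 ≤ m)
    (h : vertexMagic (genFriendshipGraph n m) A) :
    ∃ (c : A) (x : Fin m → A), IsPetalLabeling c x := by
  obtain ⟨l, μ, hl, hsum⟩ := h
  obtain ⟨hcenter, hpetal⟩ := (forall_sum_adj_eq_iff hn3 l μ).1 hsum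
  have hperiod (i : Fin m) {k : ℕ} (hk : k + 4 * (n / 4) ≤ n) :
      l (petalVertex n i (k + 4 * (n / 4))) = l (petalVertex n i k) :=
    apply_add_four_mul_of_add_eq (f := l ∘ petalVertex n i) (hpetal i) hk
  have hlast (i : Fin m) : l (petalVertex n i (n - 1)) = l (petalVertex n i 1) := by
    rw [← hperiod i (k := 1) (by omega), show 1 + 4 * (n / 4) = n - 1 by omega]
  have hsecond (i : Fin m) : l (petalVertex n i 2) = l none := by
    rw [← hperiod i (k := 2) (by omega), show 2 + 4 * (n / 4) = n by omega, petalVertex_self]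
  have hμ : μ = 2 • l none := by
    let i : Fin m := ⟨0, hm⟩
    rw [← hpetal i 0 (by omega), petalVertex_zero, hsecond, two_nsmul]
  refine ⟨l none, fun i => l (petalVertex n i 1), hl _, fun i => hl _, fun i hi => ?_, ?_⟩
  · have hthird := hpetal i 1 (by omega)
    rw [hi, hμ, add_eq_left] at hthird
    exact hl _ hthird
  · rw [← hμ, ← hcenter]
    simp only [hlast, two_nsmul]

/-- The labels `c, x, c, 2c - x` repeated with period `4`, where `c` is the label of the common
vertex, at position `0`. -/
def petalPattern (c x : A) (k : ℕ) : A :=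
  if k % 2 = 0 then c else if k % 4 = 1 then x else 2 • c - x

theorem petalPattern_add_add_two (c x : A) (k : ℕ) :
    petalPattern c x k + petalPattern c x (k + 2) = 2 • c := by
  have : k % 4 < 4 := Nat.mod_lt _ (by norm_num)
  unfold petalPattern
  split_ifs <;> first | omega | abel

theorem IsPetalLabeling.petalPattern_ne_zero {ι : Type*} [Fintype ι] {c : A} {x : ι → A}
    (h : IsPetalLabeling c x) (i : ι) (k : ℕ) : petalPattern c (x i) k ≠ 0 := by
  unfold petalPattern
  split_ifs
  exacts [h.center_ne_zero, h.ne_zero i, sub_ne_zero.2 (h.ne_two_nsmul i).symm]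

theorem IsPetalLabeling.vertexMagic {c : A} {x : Fin m → A} (h : IsPetalLabeling c x)
    (hn : n % 4 = 2) (hn3 : 3 ≤ n) : vertexMagic (genFriendshipGraph n m) A := by
  let l : Option (Fin m × Fin (n - 1)) → A
    | none => c
    | some (i, j) => petalPattern c (x i) (j + 1)
  have hl (i : Fin m) (k : ℕ) (hk : k ≤ n) : l (petalVertex n i k) = petalPattern c (x i) k := by
    rcases k with _ | k
    · rfl
    by_cases hlt : k < n - 1
    · simp [petalVertex, hlt, l]
    · simp only [petalVertex, hlt, l, petalPattern, dite_false]
      rw [if_pos (by omega)]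
  refine ⟨l, 2 • c, ?_, (forall_sum_adj_eq_iff hn3 l _).2 ⟨?_, fun i k hk => ?_⟩⟩
  · rintro (_ | ⟨i, j⟩)
    exacts [h.center_ne_zero, h.petalPattern_ne_zero i _]
  · rw [← h.sum_eq]
    refine Finset.sum_congr rfl fun i _ => ?_
    rw [hl i 1 (by omega), hl i (n - 1) (by omega), two_nsmul]
    simp [petalPattern, show (n - 1) % 2 = 1 by omega, show (n - 1) % 4 = 1 by omega]
  · rw [hl i k (by omega), hl i (k + 2) hk, petalPattern_add_add_two]

theorem isPetalLabeling_const_iff {ι : Type*} [Fintype ι] {c : A} (hc : c ≠ 0) :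
    IsPetalLabeling c (fun _ : ι => c) ↔ 2 * Fintype.card ι ≡ 2 [MOD addOrderOf c] := by
  have hsum : ∑ _ : ι, 2 • c = (2 * Fintype.card ι) • c := by
    rw [Finset.sum_const, Finset.card_univ, mul_nsmul]
  rw [← nsmul_eq_nsmul_iff_modEq, ← hsum]
  have hne : c ≠ 2 • c := fun e => hc (by simpa [two_nsmul] using e)
  exact ⟨fun h => h.sum_eq, fun h => ⟨hc, fun _ => hc, fun _ => hne, h⟩⟩

theorem IsPetalLabeling.cons_cons_neg {c : A} {x : Fin m → A} (h : IsPetalLabeling c x)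
    (hc3 : 3 • c ≠ 0) :
    IsPetalLabeling c (Fin.cons c (Fin.cons (-c) x : Fin (m + 1) → A) : Fin (m + 2) → A) where
  center_ne_zero := h.center_ne_zero
  ne_zero := by simpa [Fin.forall_fin_succ, h.center_ne_zero] using h.ne_zero
  ne_two_nsmul := by
    have hself : c ≠ 2 • c := fun e => h.center_ne_zero (by simpa [two_nsmul] using e)
    have hneg : -c ≠ 2 • c := fun e => hc3 (by rw [succ_nsmul, ← e, neg_add_cancel])
    simpa [Fin.forall_fin_succ, hself, hneg] using h.ne_two_nsmul
  sum_eq := by simp [Fin.sum_univ_succ, ← h.sum_eq]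

theorem isPetalLabeling_three_nsmul_neg_two_nsmul {c : A} (hc3 : 3 • c ≠ 0) (hc4 : 4 • c ≠ 0) :
    IsPetalLabeling c ![3 • c, -(2 • c)] := by
  have hc : c ≠ 0 := by rintro rfl; simp at hc3
  have hdouble : 4 • c = 2 • (2 • c) := by rw [← mul_nsmul]
  have hc2 : 2 • c ≠ 0 := fun e => hc4 (by rw [hdouble, e, nsmul_zero])
  have hne : 3 • c ≠ 2 • c := fun e => hc (by simpa [succ_nsmul] using e)
  have hne_neg : (-(2 • c) : A) ≠ 2 • c := fun e =>
    hc4 (by rw [hdouble, two_nsmul (2 • c), ← neg_eq_iff_add_eq_zero, e])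
  refine ⟨hc, ?_, ?_, ?_⟩
  · simpa [Fin.forall_fin_two] using ⟨hc3, hc2⟩
  · simpa [Fin.forall_fin_two] using ⟨hne, hne_neg⟩
  · rw [Fin.sum_univ_two, Matrix.cons_val_zero, Matrix.cons_val_one, Matrix.cons_val_zero]
    abel

theorem exists_isPetalLabeling_succ {c : A} (hc3 : 3 • c ≠ 0) (hc4 : 4 • c ≠ 0) :
    ∀ m, ∃ x : Fin (m + 1) → A, IsPetalLabeling c x
  | 0 => ⟨fun _ => c, (isPetalLabeling_const_iff (by rintro rfl; simp at hc3)).2 (by rfl)⟩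
  | 1 => ⟨_, isPetalLabeling_three_nsmul_neg_two_nsmul hc3 hc4⟩
  | m + 2 =>
    have ⟨_, hx⟩ := exists_isPetalLabeling_succ hc3 hc4 m
    ⟨_, hx.cons_cons_neg hc3⟩

theorem exists_isPetalLabeling_of_three_nsmul_ne_zero {a : A} (ha : 3 • a ≠ 0) (hm : 1 ≤ m) :
    ∃ (c : A) (x : Fin m → A), IsPetalLabeling c x := by
  obtain ⟨k, rfl⟩ := Nat.exists_eq_add_of_le' hm
  by_cases ha4 : 4 • a = 0
  · obtain ⟨c, hc, hc2⟩ : ∃ c : A, c ≠ 0 ∧ 2 • c = 0 := by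
      by_cases ha2 : 2 • a = 0
      · exact ⟨a, by rintro rfl; simp at ha, ha2⟩
      · exact ⟨2 • a, ha2, by rw [← mul_nsmul, ha4]⟩
    refine ⟨c, _, (isPetalLabeling_const_iff hc).2 (nsmul_eq_nsmul_iff_modEq.1 ?_)⟩
    rw [mul_nsmul, hc2, nsmul_zero]
  · exact ⟨a, exists_isPetalLabeling_succ ha ha4 k⟩

theorem IsPetalLabeling.eq_center {ι : Type*} [Fintype ι] {c : A} {x : ι → A}
    (h : IsPetalLabeling c x) (hA : Nat.card A = 3) (i : ι) : x i = c := by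
  have : Fact (Nat.Prime 3) := ⟨Nat.prime_three⟩
  obtain ⟨k, hk⟩ := mem_multiples_of_prime_card hA h.center_ne_zero (g' := x i)
  have hmod : (k % 3) • c = x i := by rw [← hk, ← hA, mod_natCard_nsmul]
  have hlt : k % 3 < 3 := Nat.mod_lt _ (by norm_num)
  interval_cases k % 3
  · exact absurd (by simpa using hmod.symm) (h.ne_zero i)
  · simpa using hmod.symm
  · exact absurd hmod.symm (h.ne_two_nsmul i)

theorem IsPetalLabeling.card_modEq_one {ι : Type*} [Fintype ι] {c : A} {x : ι → A}
    (h : IsPetalLabeling c x) (hA : Nat.card A = 3) : Fintype.card ι ≡ 1 [MOD 3] := by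
  have : Fact (Nat.Prime 3) := ⟨Nat.prime_three⟩
  have horder : addOrderOf c = 3 :=
    addOrderOf_eq_prime (hA ▸ card_nsmul_eq_zero') h.center_ne_zero
  obtain rfl : x = fun _ => c := funext (h.eq_center hA)
  have hmod := (isPetalLabeling_const_iff h.center_ne_zero).1 h
  rw [horder] at hmod
  exact hmod.cancel_left_of_coprime (c := 2) (by norm_num)

end

theorem stmt_17 (n m : ℕ) (hn : n % 4 = 2) (hn6 : 6 ≤ n) (hm : 1 ≤ m) :
    (∀ (A : Type*) [AddCommGroup A], Nontrivial A →
      vertexMagic (genFriendshipGraph n m) A) ↔ m % 3 = 1 := by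
  have hn3 : 3 ≤ n := by omega
  constructor
  · intro h
    obtain ⟨c, x, hx⟩ :=
      exists_isPetalLabeling_of_vertexMagic hn hn3 hm (h (ULift (ZMod 3)) inferInstance)
    simpa [Nat.ModEq] using hx.card_modEq_one (by simp)
  · intro hmod A _ _
    by_cases hA : ∀ a : A, 3 • a = 0
    · obtain ⟨c, hc⟩ := exists_ne (0 : A)
      have hcard : 2 * Fintype.card (Fin m) ≡ 2 [MOD addOrderOf c] := by
        refine Nat.ModEq.of_dvd (addOrderOf_dvd_of_nsmul_eq_zero (hA c)) ?_
        simpa using Nat.ModEq.mul_left 2 (show m ≡ 1 [MOD 3] from hmod)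
      exact ((isPetalLabeling_const_iff hc).2 hcard).vertexMagic hn hn3
    · push Not at hA
      obtain ⟨a, ha⟩ := hA
      obtain ⟨c, x, hx⟩ := exists_isPetalLabeling_of_three_nsmul_ne_zero ha hm
      exact hx.vertexMagic hn hn3
end
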